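/- arXiv:1706.08508 — 4 statements merged into one kernel-verified Lean document; each statement's English description precedes it below -/
import Mathlib

section
/- Let A, B, C be three non-collinear points in the Euclidean plane with dist(A,B) = dist(A,C) = l and dist(B,C) = b. Let M be the midpoint of BC and set q = dist(A,M). Let P be the point on the segment from A to C with dist(C,P) = b·l/(b + l), and set p = dist(B,P). Then 2p²·(l/b)³ + 3p²·(l/b)² − 4q²·(l/b) − p² = 0. -/
section Isosceles

variable {V : Type*} [NormedAddCommGroup V] [InnerProductSpace ℝ V]

/-- In an isosceles triangle with legs `l` and base `b`, the squared median to the base is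
`l ^ 2 - b ^ 2 / 4`. -/
lemma dist_midpoint_sq_of_isosceles {A B C : V} {l b : ℝ}
    (hAB : dist A B = l) (hAC : dist A C = l) (hBC : dist B C = b) :
    dist A (midpoint ℝ B C) ^ 2 = l ^ 2 - b ^ 2 / 4 := by
  have h := EuclideanGeometry.dist_sq_add_dist_sq_eq_two_mul_dist_midpoint_sq_add_half_dist_sq A B C
  rw [hAB, hAC, hBC] at h
  linarith

/-- In an isosceles triangle with apex `A`, legs `l` and base `b`, the squared distance from the
base vertex `B` to the point `s • A + t • C` of the opposite leg. -/
lemma dist_sq_point_on_leg_of_isosceles {A B C : V} {l b s t : ℝ}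
    (hAB : dist A B = l) (hAC : dist A C = l) (hBC : dist B C = b) (hst : s + t = 1) :
    dist B (s • A + t • C) ^ 2 = b ^ 2 - s * b ^ 2 + s ^ 2 * l ^ 2 := by
  obtain rfl : t = 1 - s := by linarith
  have hB : B - (s • A + (1 - s) • C) = (B - C) - s • (A - C) := by module
  have hA : A - B = (A - C) - (B - C) := by abel
  have hleg := norm_sub_sq_real (A - C) (B - C)
  rw [← hA, ← dist_eq_norm, ← dist_eq_norm, ← dist_eq_norm, hAB, hAC, hBC,
    real_inner_comm] at hleg
  rw [dist_eq_norm, hB, norm_sub_sq_real, norm_smul, mul_pow, Real.norm_eq_abs, sq_abs,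
    inner_smul_right, ← dist_eq_norm, ← dist_eq_norm, hAC, hBC]
  linear_combination -s * hleg

end Isosceles

theorem stmt_3 (A B C P : EuclideanSpace ℝ (Fin 2)) (l b p q : ℝ)
    (hcol : ¬ Collinear ℝ ({A, B, C} : Set (EuclideanSpace ℝ (Fin 2))))
    (hAB : dist A B = l) (hAC : dist A C = l) (hBC : dist B C = b)
    (hq : q = dist A (midpoint ℝ B C))
    (hP : P ∈ segment ℝ A C) (hCP : dist C P = b * l / (b + l))
    (hp : p = dist B P) :
    2 * p ^ 2 * (l / b) ^ 3 + 3 * p ^ 2 * (l / b) ^ 2 - 4 * q ^ 2 * (l / b) - p ^ 2 = 0 := by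
  have hb : 0 < b := hBC ▸ dist_pos.2 (ne₂₃_of_not_collinear hcol)
  have hl : 0 < l := hAB ▸ dist_pos.2 (ne₁₂_of_not_collinear hcol)
  obtain ⟨s, t, hs, -, hst, rfl⟩ := hP
  have hs_eq : s = b / (b + l) := by
    have hC : C - (s • A + t • C) = s • (C - A) := by
      obtain rfl : t = 1 - s := by linarith
      module
    rw [dist_eq_norm, hC, norm_smul, Real.norm_of_nonneg hs, ← dist_eq_norm, dist_comm, hAC] at hCP
    apply mul_right_cancel₀ hl.ne'
    rw [hCP]
    ring
  rw [hp, hq, dist_midpoint_sq_of_isosceles hAB hAC hBC,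
    dist_sq_point_on_leg_of_isosceles hAB hAC hBC hst, hs_eq]
  field_simp
  ring
end

section
/- There is no polynomial h ∈ ℚ[X] such that 2 + 3·h − 4·X²·h² = h³ in ℚ[X]. -/
open Polynomial in
theorem stmt_4 :
    ¬ ∃ h : Polynomial ℚ, 2 + 3 * h - 4 * X ^ 2 * h ^ 2 = h ^ 3 := by
  rintro ⟨h, hh⟩
  have two_isUnit : IsUnit (2 : ℚ[X]) := by
    exact isUnit_C.2 (IsUnit.mk0 (2 : ℚ) two_ne_zero)
  have h_dvd : h ∣ 2 := ⟨h ^ 2 + 4 * X ^ 2 * h - 3, by linear_combination hh⟩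
  obtain ⟨c, -, rfl⟩ := Polynomial.isUnit_iff.1 (isUnit_of_dvd_unit h_dvd two_isUnit)
  have eval_zero := congrArg (eval 0) hh
  have eval_one := congrArg (eval 1) hh
  simp at eval_zero eval_one
  have hc : c = 0 := pow_eq_zero_iff two_ne_zero |>.1 (by linarith)
  norm_num [hc] at eval_zero
end

section
/- Let q be a real number that is transcendental over ℚ, and let F = ℚ(q) be the subfield of ℝ generated by q over ℚ. Then the polynomial 2X³ + 3X² − 4q²·X − 1, regarded as a polynomial with coefficients in F, is irreducible over F. -/
set_option autoImplicit false

open Polynomial in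
theorem polynomial_cubic_ne_zero {K : Type*} [Field K] [CharZero K] (s : K[X]) :
    s ^ 3 + 3 * s ^ 2 - 8 * X ^ 2 * s - 4 ≠ 0 := by
  intro h
  have hu : IsUnit s := by
    refine isUnit_of_dvd_unit (y := C 4) ⟨s ^ 2 + 3 * s - 8 * X ^ 2, ?_⟩
      (isUnit_C.2 (by norm_num))
    rw [map_ofNat]
    linear_combination -h
  obtain ⟨c, hc, rfl⟩ := isUnit_iff.1 hu
  have h2 : C (8 * c) * X ^ 2 = C (c ^ 3 + 3 * c ^ 2 - 4) := by
    simp only [map_mul, map_sub, map_add, map_pow, map_ofNat]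
    linear_combination -h
  have hcoeff : 8 * c = 0 := by
    have := congrArg (fun p => coeff p 2) h2
    simpa only [coeff_C_mul_X_pow, coeff_C_of_ne_zero two_ne_zero, if_true] using this
  exact hc.ne_zero (by simpa using hcoeff)

open Polynomial in
theorem ratFunc_cubic_ne_zero {K : Type*} [Field K] [CharZero K] (r : RatFunc K) :
    2 * r ^ 3 + 3 * r ^ 2 - 4 * RatFunc.X ^ 2 * r - 1 ≠ 0 := by
  intro h
  have hmonic : (X ^ 3 + (C 3 * X ^ 2 - C (8 * X ^ 2) * X - C 4) : K[X][X]).Monic := by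
    monicity!
  -- `2 * r` is a root of a monic polynomial over `K[X]`, hence a polynomial.
  obtain ⟨s, hs⟩ := isInteger_of_is_root_of_monic hmonic (r := 2 * r) (by
    simp only [map_add, map_sub, map_mul, map_pow, aeval_X, aeval_C, map_ofNat,
      RatFunc.algebraMap_X]
    linear_combination 4 * h)
  refine polynomial_cubic_ne_zero s (RatFunc.algebraMap_injective K ?_)
  simp only [map_add, map_sub, map_mul, map_pow, map_ofNat, RatFunc.algebraMap_X, map_zero, hs]
  linear_combination 4 * h

open Polynomial IntermediateField in
theorem irreducible_cubic_adjoin_transcendental {K L : Type*} [Field K] [CharZero K] [Field L]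
    [Algebra K L] (q : L) (hq : Transcendental K q) :
    Irreducible
      (C 2 * X ^ 3 + C 3 * X ^ 2 - C (4 * (AdjoinSimple.gen K q) ^ 2) * X - 1 : K⟮q⟯[X]) := by
  have : CharZero K⟮q⟯ := charZero_of_injective_algebraMap (algebraMap K K⟮q⟯).injective
  have hdeg : (C 2 * X ^ 3 + C 3 * X ^ 2 - C (4 * (AdjoinSimple.gen K q) ^ 2) * X - 1 :
      K⟮q⟯[X]).natDegree = 3 := by
    compute_degree!
  refine irreducible_of_degree_le_three_of_not_isRoot (by rw [hdeg]; decide) fun x hx => ?_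
  refine ratFunc_cubic_ne_zero ((RatFunc.algEquivOfTranscendental q hq).symm x) ?_
  have := congrArg (RatFunc.algEquivOfTranscendental q hq).symm hx
  simpa only [eval_add, eval_sub, eval_mul, eval_pow, eval_C, eval_X, eval_one, eval_ofNat,
    map_add, map_sub, map_mul, map_pow, map_ofNat, map_one, map_zero,
    RatFunc.algEquivOfTranscendental_symm_gen] using this

open Polynomial IntermediateField in
theorem stmt_7 (q : ℝ) (hq : Transcendental ℚ q) :
    Irreducible
      (C 2 * X ^ 3 + C 3 * X ^ 2 -
        C (4 * (IntermediateField.AdjoinSimple.gen ℚ q) ^ 2) * X - 1 :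
        Polynomial ℚ⟮q⟯) := by
  exact irreducible_cubic_adjoin_transcendental q hq
end

section
/- Let q be a real number that is transcendental over ℚ, let F = ℚ(q) ⊆ ℝ, and let α be a real number with 2α³ + 3α² − 4q²·α − 1 = 0. Then the degree [F(α) : F] is not a power of 2. -/
set_option autoImplicit false

open Polynomial in
/-- The cubic `2 x³ + 3 x² - 4 X² x - 1` has no root `r / s` in the fraction field of `ℚ[X]`. -/
theorem no_fraction_root (r s : ℚ[X]) (hs : s ≠ 0) :
    2 * r ^ 3 + 3 * r ^ 2 * s - 4 * X ^ 2 * r * s ^ 2 - s ^ 3 ≠ 0 := by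
  intro h
  obtain ⟨a, b, hr, hsb, hu⟩ := extract_gcd r s
  have hab : IsCoprime a b := (gcd_isUnit_iff a b).mp hu
  have hg : gcd r s ≠ 0 := by
    intro h0
    exact hs (by rw [hsb, h0, zero_mul])
  have key : 2 * a ^ 3 + 3 * a ^ 2 * b - 4 * X ^ 2 * a * b ^ 2 - b ^ 3 = 0 := by
    generalize gcd r s = g at *
    subst hr hsb
    refine (mul_eq_zero.mp (?_ : g ^ 3 * _ = 0)).resolve_left (pow_ne_zero 3 hg)
    linear_combination h
  have ha : IsUnit a := (hab.pow_right (n := 3)).isUnit_of_dvd' dvd_rfl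
    ⟨2 * a ^ 2 + 3 * a * b - 4 * X ^ 2 * b ^ 2, by linear_combination -key⟩
  have hb : IsUnit b := (hab.symm.pow_right (n := 3)).isUnit_of_dvd' dvd_rfl
    ⟨C (1 / 2) * (b ^ 2 + 4 * X ^ 2 * a * b - 3 * a ^ 2), by
      have h2 : (C (1 / 2) : ℚ[X]) * 2 = 1 := by
        rw [← C_ofNat, ← C_mul]; norm_num
      linear_combination C (1 / 2) * key - a ^ 3 * h2⟩
  obtain ⟨c, hc, rfl⟩ := isUnit_iff.mp ha
  obtain ⟨d, hd, rfl⟩ := isUnit_iff.mp hb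
  have e0 := congrArg (eval 0) key
  have e1 := congrArg (eval 1) key
  simp only [eval_sub, eval_add, eval_mul, eval_pow, eval_ofNat, eval_C, eval_X, eval_zero] at e0 e1
  have : c * d ^ 2 = 0 := by linear_combination (e0 - e1) / 4
  exact mul_ne_zero hc.ne_zero (pow_ne_zero 2 hd.ne_zero) this

open IntermediateField Polynomial in
theorem cubic_ne_zero_of_mem_adjoin {q : ℝ} (hq : Transcendental ℚ q) {x : ℝ} (hx : x ∈ ℚ⟮q⟯) :
    2 * x ^ 3 + 3 * x ^ 2 - 4 * q ^ 2 * x - 1 ≠ 0 := by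
  intro h
  obtain ⟨r, s, rfl⟩ := (mem_adjoin_simple_iff ℚ x).mp hx
  have hs : aeval q s ≠ 0 := by
    intro h0
    simp [h0] at h
  refine no_fraction_root r s (fun h0 => hs (by simp [h0]))
    ((transcendental_iff.mp hq) _ ?_)
  field_simp at h
  simp only [map_sub, map_add, map_mul, map_pow, map_ofNat, aeval_X]
  linear_combination h

open IntermediateField Polynomial in
theorem finrank_adjoin_cubic_root (q α : ℝ) (hq : Transcendental ℚ q)
    (hα : 2 * α ^ 3 + 3 * α ^ 2 - 4 * q ^ 2 * α - 1 = 0) :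
    Module.finrank ℚ⟮q⟯ (IntermediateField.adjoin ℚ⟮q⟯ {α}) = 3 := by
  set p : ℚ⟮q⟯[X] := C 2 * X ^ 3 + C 3 * X ^ 2 + C (-4 * AdjoinSimple.gen ℚ q ^ 2) * X + C (-1)
    with hp
  have hdeg : p.natDegree = 3 := natDegree_cubic two_ne_zero
  have hp0 : p ≠ 0 := by
    rintro h
    simp [h] at hdeg
  have hirr : Irreducible p := by
    rw [irreducible_iff_roots_eq_zero_of_degree_le_three (by omega) (by omega)]
    refine Multiset.eq_zero_of_forall_notMem fun x hx => ?_
    have hx' := (mem_roots hp0).mp hx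
    refine cubic_ne_zero_of_mem_adjoin hq (x := algebraMap ℚ⟮q⟯ ℝ x) x.2 ?_
    have := congrArg (algebraMap ℚ⟮q⟯ ℝ) hx'
    simp only [hp, eval_add, eval_mul, eval_pow, eval_neg, eval_C, eval_X, eval_ofNat,
      eval_one, map_add, map_mul, map_pow, map_neg, map_ofNat, map_one, map_zero,
      AdjoinSimple.algebraMap_gen] at this
    linear_combination this
  have hroot : aeval α p = 0 := by
    simp only [hp, aeval_C, aeval_X, map_add, map_mul, map_pow, map_neg, map_ofNat, map_one,
      AdjoinSimple.algebraMap_gen]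
    linear_combination hα
  have hint : IsIntegral ℚ⟮q⟯ α := IsAlgebraic.isIntegral ⟨p, hp0, hroot⟩
  rw [adjoin.finrank hint, ← minpoly.eq_of_irreducible hirr hroot,
    natDegree_mul_C (inv_ne_zero (leadingCoeff_ne_zero.mpr hp0)), hdeg]

open IntermediateField in
theorem stmt_9 (q α : ℝ) (hq : Transcendental ℚ q)
    (hα : 2 * α ^ 3 + 3 * α ^ 2 - 4 * q ^ 2 * α - 1 = 0) :
    ¬ ∃ n : ℕ, Module.finrank ℚ⟮q⟯ (IntermediateField.adjoin ℚ⟮q⟯ {α}) = 2 ^ n := by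
  rintro ⟨n, hn⟩
  rw [finrank_adjoin_cubic_root q α hq hα] at hn
  have : 3 ∣ 2 := Nat.prime_three.dvd_of_dvd_pow (Dvd.intro 1 (by omega) : 3 ∣ 2 ^ n)
  omega
end
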